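/- arXiv:1407.3500 — 3 statements merged into one kernel-verified Lean document; each statement's English description precedes it below -/
import Mathlib

section
/- There exists a constant C > 0 such that for every n and every Boolean function f : 𝔽₂ⁿ → {1,−1} with Fourier sparsity s ≥ 1, the Fourier dimension of f satisfies dim(f) ≤ C · s^{2/3}. -/
/-!
The proof gives `dim f ≤ 3√s + 12√s · log s`, which is `O(s^(2/3))`.

Everything rests on the identity `∑ f̂(γ) f̂(γ + v) = [v = 0]`, which is `f² = 1` on the Fourier side
(`autocorrelation`). A quotient of the dual space by a span of `k` parities is encoded by a linear
endomorphism `π` whose kernel has dimension `k`. Restricting `f` to a translate of `(ker π)^⊥` sums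
the coefficients over the fibres of `π`, with signs depending on the translate (`fiberSum`), and
Parseval's identity survives every such restriction.

* A restriction with `r` nonzero coefficients becomes a single character after at most `3√r` further
  parities (`exists_character`): fix a coefficient `M`; while `|M| < 1` some other coefficient is at
  least `√((1 - |M|) / r)` in absolute value, and folding it into `M` lowers `√(1 - |M|)` by at
  least `1 / (2√r)`.
* Since nearly all folded coefficients cancel, the `r` nonzero ones meet in groups of at least two,
  so the image of the Fourier support in the quotient loses at least `(r - 1) / 2` elements
  (`exists_merge`).
* If the image of the support has `m` elements, the uncertainty principle shows that on average over
  the translates a restriction has at least `m² / s` nonzero coefficients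
  (`exists_large_restriction`).

Iterating, a decrease of `m` by one costs `O(√s / m)` parities, for a total of `O(√s log s)` until
`m ≤ 3√s`. The dimension is at most the number of parities used plus the final `m`
(`finrank_span_suppF_le`).
-/

/-- The dual space of `𝔽₂ⁿ`: linear forms `𝔽₂ⁿ → 𝔽₂`. -/
abbrev DualF (n : ℕ) : Type := (Fin n → ZMod 2) →ₗ[ZMod 2] ZMod 2

/-- A Boolean function takes values in `{1, -1} ⊆ ℝ`. -/
def IsBooleanFn (n : ℕ) (f : (Fin n → ZMod 2) → ℝ) : Prop :=
  ∀ x, f x = 1 ∨ f x = -1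

/-- Fourier coefficient `f̂(γ) = 2⁻ⁿ Σ_x f(x) (-1)^(γ x)`. -/
noncomputable def fCoeff (n : ℕ) (f : (Fin n → ZMod 2) → ℝ) (γ : DualF n) : ℝ :=
  (2 ^ n : ℝ)⁻¹ * ∑ x : Fin n → ZMod 2, f x * (-1 : ℝ) ^ (γ x).val

/-- Fourier support. -/
noncomputable def fSupp (n : ℕ) (f : (Fin n → ZMod 2) → ℝ) : Set (DualF n) :=
  {γ | fCoeff n f γ ≠ 0}

/-- Fourier sparsity. -/
noncomputable def fSpar (n : ℕ) (f : (Fin n → ZMod 2) → ℝ) : ℕ :=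
  (fSupp n f).ncard

/-- Fourier dimension: dimension of the 𝔽₂-span of the Fourier support. -/
noncomputable def fDim (n : ℕ) (f : (Fin n → ZMod 2) → ℝ) : ℕ :=
  Module.finrank (ZMod 2) (Submodule.span (ZMod 2) (fSupp n f))


/-! ### Signs -/

/-- The real sign `(-1)^z` of `z : ZMod 2`. -/
noncomputable def sgn (z : ZMod 2) : ℝ := (-1 : ℝ) ^ z.val

lemma sgn_zero : sgn 0 = 1 := by simp [sgn]

lemma sgn_one : sgn 1 = -1 := by
  have : (1 : ZMod 2).val = 1 := rfl
  simp [sgn, this]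

lemma zmod_two_cases (x : ZMod 2) : x = 0 ∨ x = 1 := by
  revert x; decide

lemma sgn_add (x y : ZMod 2) : sgn (x + y) = sgn x * sgn y := by
  have h2 : (1 : ZMod 2) + 1 = 0 := rfl
  rcases zmod_two_cases x with rfl | rfl <;> rcases zmod_two_cases y with rfl | rfl <;>
    simp [sgn_zero, sgn_one, h2]

lemma sgn_sub (x y : ZMod 2) : sgn (x - y) = sgn x * sgn y := by
  rw [← sgn_add]; congr 1; revert x y; decide

lemma sgn_mul_self (x : ZMod 2) : sgn x * sgn x = 1 := by
  rcases zmod_two_cases x with rfl | rfl <;> simp [sgn_zero, sgn_one]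

lemma sgn_ne_zero (x : ZMod 2) : sgn x ≠ 0 := by
  intro h; have := sgn_mul_self x; simp [h] at this

/-! ### Restrictions and Parseval's identity -/

section Abstract

open Classical

variable {D : Type*} [AddCommGroup D] [Module (ZMod 2) D] [Fintype D]

lemma exists_dual_eq_one {γ : D} (h : γ ≠ 0) : ∃ l : D →ₗ[ZMod 2] ZMod 2, l γ = 1 := by
  by_contra! hc
  apply h
  rw [← Module.forall_dual_apply_eq_zero_iff (ZMod 2)]
  intro l
  exact (zmod_two_cases (l γ)).resolve_right (hc l)

/-- The coefficient at `c` of the restriction determined by `π` and `a`: the sum of the values of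
`φ`, twisted by the signs of `a`, over the fibre of `π` above `c`. If `φ = f̂`, then `a` is
evaluation at a point `x` and these are the Fourier coefficients of `f` restricted to
`x + (ker π)^⊥`. -/
noncomputable def fiberSum (φ : D → ℝ) (π : D →ₗ[ZMod 2] D) (a : D →ₗ[ZMod 2] ZMod 2) (c : D) : ℝ :=
  ∑ γ, if π γ = c then φ γ * sgn (a γ) else 0

/-- The support of the restriction determined by `π` and `a`. -/
noncomputable def fiberSupp (φ : D → ℝ) (π : D →ₗ[ZMod 2] D) (a : D →ₗ[ZMod 2] ZMod 2) : Finset D :=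
  Finset.univ.filter fun c => fiberSum φ π a c ≠ 0

/-- The support of `φ`. -/
noncomputable def suppF (φ : D → ℝ) : Finset D := Finset.univ.filter fun γ => φ γ ≠ 0

lemma mem_fiberSupp {φ : D → ℝ} {π : D →ₗ[ZMod 2] D} {a : D →ₗ[ZMod 2] ZMod 2} {c : D} :
    c ∈ fiberSupp φ π a ↔ fiberSum φ π a c ≠ 0 := by simp [fiberSupp]

lemma mem_suppF {φ : D → ℝ} {γ : D} : γ ∈ suppF φ ↔ φ γ ≠ 0 := by simp [suppF]

lemma fiberSum_comp (φ : D → ℝ) (π σ : D →ₗ[ZMod 2] D) (a : D →ₗ[ZMod 2] ZMod 2) (y : D) :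
    fiberSum φ (σ ∘ₗ π) a y = ∑ c, if σ c = y then fiberSum φ π a c else 0 := by
  unfold fiberSum
  simp_rw [← Finset.sum_filter]
  rw [Finset.sum_filter]
  simp_rw [Finset.sum_filter]
  have : ∀ c : D, (if σ c = y then ∑ γ, (if π γ = c then φ γ * sgn (a γ) else 0) else 0)
      = ∑ γ, if π γ = c then (if σ (π γ) = y then φ γ * sgn (a γ) else 0) else 0 := by
    intro c
    split_ifs with h
    · refine Finset.sum_congr rfl fun γ _ => ?_
      split_ifs with h1 h2 <;> simp_all
    · symm; refine Finset.sum_eq_zero fun γ _ => ?_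
      split_ifs with h1 h2 <;> simp_all
  simp_rw [this]
  rw [Finset.sum_comm]
  simp

/-- Moving the base point inside the annihilator of `ker π` changes the coefficients of the
restriction only by signs. -/
lemma fiberSum_add (φ : D → ℝ) (π : D →ₗ[ZMod 2] D) (a l : D →ₗ[ZMod 2] ZMod 2) (c : D) :
    fiberSum φ π (a + l ∘ₗ π) c = sgn (l c) * fiberSum φ π a c := by
  unfold fiberSum
  rw [Finset.mul_sum]
  refine Finset.sum_congr rfl fun γ _ => ?_
  split_ifs with h
  · simp only [LinearMap.add_apply, LinearMap.comp_apply, sgn_add, h]; ring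
  · simp

lemma fiberSupp_add (φ : D → ℝ) (π : D →ₗ[ZMod 2] D) (a l : D →ₗ[ZMod 2] ZMod 2) :
    fiberSupp φ π (a + l ∘ₗ π) = fiberSupp φ π a := by
  ext c
  simp [mem_fiberSupp, fiberSum_add, sgn_ne_zero]

lemma fiberSupp_comp_subset (φ : D → ℝ) (π σ : D →ₗ[ZMod 2] D) (a : D →ₗ[ZMod 2] ZMod 2) :
    fiberSupp φ (σ ∘ₗ π) a ⊆ (fiberSupp φ π a).image σ := by
  intro y hy
  rw [mem_fiberSupp, fiberSum_comp] at hy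
  obtain ⟨c, -, hc⟩ := Finset.exists_ne_zero_of_sum_ne_zero hy
  rw [Finset.mem_image]
  refine ⟨c, ?_, ?_⟩
  · rw [mem_fiberSupp]; intro h; simp [h] at hc
  · by_contra h; simp [h] at hc

lemma fiberSupp_subset_image (φ : D → ℝ) (π : D →ₗ[ZMod 2] D) (a : D →ₗ[ZMod 2] ZMod 2) :
    fiberSupp φ π a ⊆ (suppF φ).image π := by
  intro y hy
  rw [mem_fiberSupp] at hy
  obtain ⟨c, -, hc⟩ := Finset.exists_ne_zero_of_sum_ne_zero hy
  rw [Finset.mem_image]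
  refine ⟨c, ?_, ?_⟩
  · rw [mem_suppF]; intro h; simp [h] at hc
  · by_contra h; simp [h] at hc

/-- Parseval's identity for every restriction, a consequence of the vanishing of all nontrivial
autocorrelations of `φ`. -/
lemma parseval (φ : D → ℝ) (hφ : ∀ v, ∑ γ, φ γ * φ (γ + v) = if v = 0 then 1 else 0)
    (π : D →ₗ[ZMod 2] D) (a : D →ₗ[ZMod 2] ZMod 2) : ∑ c, fiberSum φ π a c ^ 2 = 1 := by
  calc ∑ c, fiberSum φ π a c ^ 2
      = ∑ c, ∑ γ, ∑ γ', if π γ = c then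
          (if π γ' = c then φ γ * sgn (a γ) * (φ γ' * sgn (a γ')) else 0) else 0 := by
        refine Finset.sum_congr rfl fun c _ => ?_
        unfold fiberSum
        rw [sq, Finset.sum_mul_sum]
        refine Finset.sum_congr rfl fun γ _ => Finset.sum_congr rfl fun γ' _ => ?_
        split_ifs <;> simp
    _ = ∑ γ, ∑ γ', if π γ' = π γ then φ γ * sgn (a γ) * (φ γ' * sgn (a γ')) else 0 := by
        rw [Finset.sum_comm]
        refine Finset.sum_congr rfl fun γ _ => ?_
        rw [Finset.sum_comm]
        refine Finset.sum_congr rfl fun γ' _ => ?_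
        simp
    _ = ∑ γ, ∑ v, if π v = 0 then sgn (a v) * (φ γ * φ (γ + v)) else 0 := by
        refine Finset.sum_congr rfl fun γ _ => ?_
        rw [← Equiv.sum_comp (Equiv.addLeft γ)]
        refine Finset.sum_congr rfl fun v _ => ?_
        have h := sgn_mul_self (a γ)
        simp only [Equiv.coe_addLeft, map_add, add_eq_left, sgn_add]
        split_ifs
        · linear_combination (φ γ * φ (γ + v) * sgn (a v)) * h
        · rfl
    _ = ∑ v, if π v = 0 then sgn (a v) * (if v = 0 then 1 else 0) else 0 := by
        rw [Finset.sum_comm]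
        refine Finset.sum_congr rfl fun v _ => ?_
        split_ifs with _ h2
        · rw [← Finset.mul_sum, hφ, if_pos h2]
        · rw [← Finset.mul_sum, hφ, if_neg h2]
        · simp
    _ = 1 := by
        rw [Finset.sum_eq_single 0]
        · simp [sgn_zero]
        · intro v _ hv; simp [hv]
        · simp

/-! ### Folding coefficients -/

/-- The map `x ↦ x - l x • δ`; when `l δ = 1` it collapses exactly the line spanned by `δ`. -/
noncomputable def fold (l : D →ₗ[ZMod 2] ZMod 2) (δ : D) : D →ₗ[ZMod 2] D :=
  LinearMap.id - l.smulRight δ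

lemma fold_apply (l : D →ₗ[ZMod 2] ZMod 2) (δ x : D) : fold l δ x = x - l x • δ := by
  simp [fold]

lemma finrank_ker_fold_le (l : D →ₗ[ZMod 2] ZMod 2) (δ : D) :
    Module.finrank (ZMod 2) (LinearMap.ker (fold l δ)) ≤ 1 := by
  have h : LinearMap.ker (fold l δ) ≤ Submodule.span (ZMod 2) {δ} := by
    intro x hx
    rw [LinearMap.mem_ker, fold_apply, sub_eq_zero] at hx
    rw [hx]
    exact Submodule.smul_mem _ _ (Submodule.mem_span_singleton_self δ)
  exact (Submodule.finrank_mono h).trans ((finrank_span_le_card ({δ} : Set D)).trans (by simp))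

lemma finrank_ker_comp_le (σ ρ : D →ₗ[ZMod 2] D) :
    Module.finrank (ZMod 2) (LinearMap.ker (σ ∘ₗ ρ)) ≤
      Module.finrank (ZMod 2) (LinearMap.ker σ) + Module.finrank (ZMod 2) (LinearMap.ker ρ) := by
  set U := LinearMap.ker (σ ∘ₗ ρ)
  have h1 := LinearMap.finrank_range_add_finrank_ker (ρ.domRestrict U)
  have h2 : Module.finrank (ZMod 2) (LinearMap.range (ρ.domRestrict U)) ≤
      Module.finrank (ZMod 2) (LinearMap.ker σ) := by
    apply Submodule.finrank_mono
    rintro _ ⟨⟨x, hx⟩, rfl⟩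
    exact hx
  have h3 : Module.finrank (ZMod 2) (LinearMap.ker (ρ.domRestrict U)) ≤
      Module.finrank (ZMod 2) (LinearMap.ker ρ) := by
    rw [LinearEquiv.finrank_eq ((LinearMap.ker (ρ.domRestrict U)).equivMapOfInjective
      U.subtype U.injective_subtype)]
    apply Submodule.finrank_mono
    rintro _ ⟨x, hx, rfl⟩
    exact hx
  omega

lemma finrank_span_le (π : D →ₗ[ZMod 2] D) (S : Finset D) :
    Module.finrank (ZMod 2) (Submodule.span (ZMod 2) (S : Set D)) ≤
      Module.finrank (ZMod 2) (LinearMap.ker π) + (S.image π).card := by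
  set U := Submodule.span (ZMod 2) (S : Set D) with hU
  have h1 := LinearMap.finrank_range_add_finrank_ker (π.domRestrict U)
  have h2 : Module.finrank (ZMod 2) (LinearMap.range (π.domRestrict U)) ≤ (S.image π).card := by
    refine le_trans ?_ (finrank_span_finset_le_card (R := ZMod 2) (S.image π))
    apply Submodule.finrank_mono
    rintro _ ⟨⟨x, hx⟩, rfl⟩
    have : π x ∈ U.map π := ⟨x, hx, rfl⟩
    rw [hU, Submodule.map_span] at this
    simpa using this
  have h3 : Module.finrank (ZMod 2) (LinearMap.ker (π.domRestrict U)) ≤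
      Module.finrank (ZMod 2) (LinearMap.ker π) := by
    rw [LinearEquiv.finrank_eq ((LinearMap.ker (π.domRestrict U)).equivMapOfInjective
      U.subtype U.injective_subtype)]
    apply Submodule.finrank_mono
    rintro _ ⟨x, hx, rfl⟩
    exact hx
  omega

/-- Folding two coefficients into one: after restricting by one further parity, with the base point
chosen so that the two signs agree, their absolute values add up. -/
lemma exists_fold (φ : D → ℝ) (π : D →ₗ[ZMod 2] D) (a : D →ₗ[ZMod 2] ZMod 2) {c₁ c₂ : D}
    (hne : c₂ ≠ c₁) : ∃ (ρ : D →ₗ[ZMod 2] D) (l : D →ₗ[ZMod 2] ZMod 2),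
      Module.finrank (ZMod 2) (LinearMap.ker ρ) ≤ 1 ∧
      |fiberSum φ (ρ ∘ₗ π) (a + l ∘ₗ π) (ρ c₁)| =
        |fiberSum φ π a c₁| + |fiberSum φ π a c₂| := by
  obtain ⟨l, hl⟩ := exists_dual_eq_one (sub_ne_zero.2 hne)
  set ρ := fold l (c₂ - c₁) with hρ
  have hfib : ∀ c, ρ c = ρ c₁ ↔ c = c₁ ∨ c = c₂ := by
    intro c
    rw [← sub_eq_zero, ← map_sub, hρ, fold_apply]
    constructor
    · intro h
      rcases zmod_two_cases (l (c - c₁)) with h0 | h0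
      · left; rw [h0] at h; simpa [sub_eq_zero] using h
      · right; rw [h0] at h; simpa [sub_eq_zero] using h
    · rintro (rfl | rfl)
      · simp
      · rw [hl]; simp
  have hsum : ∀ a', fiberSum φ (ρ ∘ₗ π) a' (ρ c₁) = fiberSum φ π a' c₁ + fiberSum φ π a' c₂ := by
    intro a'
    rw [fiberSum_comp, ← Finset.sum_filter, ← Finset.sum_pair hne.symm]
    congr 1
    ext c; simp [hfib]
  by_cases hs : 0 ≤ fiberSum φ π a c₁ * fiberSum φ π a c₂
  · refine ⟨ρ, 0, finrank_ker_fold_le _ _, ?_⟩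
    rw [hsum, LinearMap.zero_comp, add_zero]
    rcases mul_nonneg_iff.1 hs with h | h
    · exact (abs_add_eq_add_abs_iff _ _).2 (Or.inl h)
    · exact (abs_add_eq_add_abs_iff _ _).2 (Or.inr h)
  · refine ⟨ρ, l, finrank_ker_fold_le _ _, ?_⟩
    have h2 : sgn (l c₂) = - sgn (l c₁) := by
      have : c₂ = (c₂ - c₁) + c₁ := by abel
      rw [this, map_add, sgn_add, hl, sgn_one]; ring
    rw [hsum, fiberSum_add, fiberSum_add, h2]
    have habs : |sgn (l c₁)| = 1 := by
      have := sgn_mul_self (l c₁)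
      rw [← abs_mul_abs_self] at this
      nlinarith [abs_nonneg (sgn (l c₁))]
    rw [show sgn (l c₁) * fiberSum φ π a c₁ + -sgn (l c₁) * fiberSum φ π a c₂ =
      sgn (l c₁) * (fiberSum φ π a c₁ + - fiberSum φ π a c₂) by ring, abs_mul, habs, one_mul,
      ← abs_neg (fiberSum φ π a c₂)]
    push Not at hs
    rcases mul_neg_iff.1 hs with h | h
    · exact (abs_add_eq_add_abs_iff _ _).2 (Or.inl ⟨h.1.le, by linarith⟩)
    · exact (abs_add_eq_add_abs_iff _ _).2 (Or.inr ⟨h.1.le, by linarith⟩)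

/-! ### Restricting to a single character -/

/-- If `b² ≥ u / R` and `u ≤ (N + 1)² / (4R)`, then `u - b ≤ N² / (4R)`. In terms of
`w = √(4Ru)` this says that `w² - 2w ≤ N²` for `0 ≤ w ≤ N + 1`. -/
lemma step_arith {u b R N : ℝ} (hR : 0 < R) (hu : 0 ≤ u) (hb : 0 ≤ b) (hN : 0 ≤ N)
    (h1 : 4 * R * u ≤ (N + 1) ^ 2) (h2 : u ≤ R * b ^ 2) : 4 * R * (u - b) ≤ N ^ 2 := by
  set w := √(4 * R * u) with hw
  have hw2 : w ^ 2 = 4 * R * u := Real.sq_sqrt (by positivity)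
  have hw0 : 0 ≤ w := Real.sqrt_nonneg _
  have hwN : w ≤ N + 1 := by
    refine abs_le_of_sq_le_sq' ?_ (by linarith) |>.2
    linarith
  have hbw : w ≤ 2 * R * b := by
    refine abs_le_of_sq_le_sq' ?_ (by positivity) |>.2
    nlinarith
  have hmain : 4 * R * (u - b) ≤ w * (w - 2) := by nlinarith
  refine hmain.trans ?_
  rcases le_total w 2 with h | h
  · nlinarith [mul_nonneg hw0 (sub_nonneg.2 h), sq_nonneg N]
  · nlinarith

/-- If `4R(1 - |M|) ≤ N²`, where `M` is one coefficient of a restriction with at most `R` nonzero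
coefficients, then at most `N` further parities bring the restriction down to one character. As
the squares of the coefficients sum to `1`, some other coefficient is at least `√((1 - |M|) / R)`
in absolute value; folding it into `M` lowers `√(1 - |M|)` by at least `1 / (2√R)`. -/
lemma exists_character (φ : D → ℝ) (hφ : ∀ v, ∑ γ, φ γ * φ (γ + v) = if v = 0 then 1 else 0)
    (R : ℕ) (hR : 0 < R) (N : ℕ) : ∀ (π : D →ₗ[ZMod 2] D) (a : D →ₗ[ZMod 2] ZMod 2) (c₁ : D),
      (fiberSupp φ π a).card ≤ R →
      4 * (R : ℝ) * (1 - |fiberSum φ π a c₁|) ≤ (N : ℝ) ^ 2 →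
      ∃ (σ : D →ₗ[ZMod 2] D) (l : D →ₗ[ZMod 2] ZMod 2) (c₀ : D),
        Module.finrank (ZMod 2) (LinearMap.ker σ) ≤ N ∧
        ∀ c, c ≠ c₀ → fiberSum φ (σ ∘ₗ π) (a + l ∘ₗ π) c = 0 := by
  have hRpos : (0 : ℝ) < R := by exact_mod_cast hR
  -- A coefficient of absolute value at least `1` already leaves no room for others.
  have hdone : ∀ (N : ℕ) (π : D →ₗ[ZMod 2] D) (a : D →ₗ[ZMod 2] ZMod 2) (c₁ : D),
      1 ≤ |fiberSum φ π a c₁| → ∃ (σ : D →ₗ[ZMod 2] D) (l : D →ₗ[ZMod 2] ZMod 2) (c₀ : D),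
        Module.finrank (ZMod 2) (LinearMap.ker σ) ≤ N ∧
        ∀ c, c ≠ c₀ → fiberSum φ (σ ∘ₗ π) (a + l ∘ₗ π) c = 0 := by
    intro N π a c₁ h
    refine ⟨LinearMap.id, 0, c₁, by rw [LinearMap.ker_id, finrank_bot]; exact Nat.zero_le _, fun c hc => ?_⟩
    rw [LinearMap.id_comp, LinearMap.zero_comp, add_zero]
    have hp := parseval φ hφ π a
    have hle : ∑ x ∈ {c₁, c}, fiberSum φ π a x ^ 2 ≤ 1 :=
      hp ▸ Finset.sum_le_sum_of_subset_of_nonneg (Finset.subset_univ _)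
        fun x _ _ => sq_nonneg _
    rw [Finset.sum_pair hc.symm] at hle
    have : 1 ≤ fiberSum φ π a c₁ ^ 2 := by
      rw [← sq_abs]; nlinarith
    exact pow_eq_zero_iff (two_ne_zero) |>.1 (le_antisymm (by linarith) (sq_nonneg _))
  induction N with
  | zero =>
    intro π a c₁ _ h
    refine hdone 0 π a c₁ ?_
    by_contra! hlt
    have : 0 < 4 * (R : ℝ) * (1 - |fiberSum φ π a c₁|) := by
      apply mul_pos <;> linarith
    norm_num at h
    linarith
  | succ N ih =>
    intro π a c₁ hcard h
    by_cases h1 : 1 ≤ |fiberSum φ π a c₁|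
    · exact hdone _ π a c₁ h1
    push Not at h1
    set u := 1 - |fiberSum φ π a c₁| with hu
    obtain ⟨c₂, hne, hc₂⟩ : ∃ c₂, c₂ ≠ c₁ ∧ u ≤ R * |fiberSum φ π a c₂| ^ 2 := by
      by_contra! hc
      have hp := parseval φ hφ π a
      have hsub : ∑ c, fiberSum φ π a c ^ 2 = ∑ c ∈ fiberSupp φ π a, fiberSum φ π a c ^ 2 := by
        symm; apply Finset.sum_subset (Finset.subset_univ _)
        intro x _ hx; rw [mem_fiberSupp, not_not] at hx; simp [hx]
      have hle : ∑ c ∈ fiberSupp φ π a, fiberSum φ π a c ^ 2 ≤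
          ∑ c ∈ fiberSupp φ π a, ((if c = c₁ then |fiberSum φ π a c₁| ^ 2 - u / R else 0) + u / R)
          := by
        refine Finset.sum_le_sum fun c _ => ?_
        split_ifs with hcc
        · rw [hcc, sq_abs]; linarith
        · have := hc c hcc
          rw [zero_add, le_div_iff₀ hRpos, ← sq_abs]; linarith
      rw [Finset.sum_add_distrib, Finset.sum_ite_eq', Finset.sum_const, nsmul_eq_mul] at hle
      have hk : ((fiberSupp φ π a).card : ℝ) * (u / R) ≤ u := by
        rw [mul_div_assoc', div_le_iff₀ hRpos, mul_comm]
        have : ((fiberSupp φ π a).card : ℝ) ≤ R := by exact_mod_cast hcard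
        nlinarith
      have huR : 0 < u / R := div_pos (by linarith) hRpos
      have h0 := abs_nonneg (fiberSum φ π a c₁)
      split_ifs at hle with hm
      · nlinarith
      · rw [mem_fiberSupp, not_not] at hm
        rw [hm, abs_zero] at hu
        -- With `M = 0` all coefficients satisfy the strict bound, and there is at least one.
        have hpos : (fiberSupp φ π a).Nonempty := by
          rw [Finset.nonempty_iff_ne_empty]; intro he
          rw [hsub, he] at hp; simp at hp
        have hlt : ∑ c ∈ fiberSupp φ π a, fiberSum φ π a c ^ 2 <
            ∑ c ∈ fiberSupp φ π a, u / R := by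
          refine Finset.sum_lt_sum_of_nonempty hpos fun c hcm => ?_
          have hcc : c ≠ c₁ := by
            rintro rfl; rw [mem_fiberSupp] at hcm; exact hcm hm
          have := hc c hcc
          rw [lt_div_iff₀ hRpos, ← sq_abs]; linarith
        rw [Finset.sum_const, nsmul_eq_mul] at hlt
        linarith
    obtain ⟨ρ, l, hker, habs⟩ := exists_fold φ π a hne
    obtain ⟨σ, l', c₀, hσ, hz⟩ := ih (ρ ∘ₗ π) (a + l ∘ₗ π) (ρ c₁)
      (by
        calc _ ≤ _ := Finset.card_le_card (fiberSupp_comp_subset φ π ρ (a + l ∘ₗ π))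
          _ ≤ (fiberSupp φ π (a + l ∘ₗ π)).card := Finset.card_image_le
          _ ≤ R := by rw [fiberSupp_add]; exact hcard)
      (by
        rw [habs, ← sub_sub]
        exact step_arith hRpos (by linarith) (abs_nonneg _) (by positivity)
          (by push_cast at h; exact h) hc₂)
    refine ⟨σ ∘ₗ ρ, l + l' ∘ₗ ρ, c₀, ?_, ?_⟩
    · have := finrank_ker_comp_le σ ρ
      omega
    · intro c hc
      have := hz c hc
      rw [add_assoc, ← LinearMap.comp_assoc, ← LinearMap.comp_assoc, ← LinearMap.add_comp] at this
      exact this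

/-- A restriction with `r` nonzero coefficients can be collapsed to one character by at most `3√r`
parities. Every fibre of the collapse except one carries coefficients summing to zero, so it holds
no nonzero coefficient or at least two; hence at least `(r - 1) / 2` elements of the image of the
support disappear. -/
lemma exists_merge (φ : D → ℝ) (hφ : ∀ v, ∑ γ, φ γ * φ (γ + v) = if v = 0 then 1 else 0)
    (π : D →ₗ[ZMod 2] D) (a : D →ₗ[ZMod 2] ZMod 2) :
    ∃ π' : D →ₗ[ZMod 2] D,
      (Module.finrank (ZMod 2) (LinearMap.ker π') : ℝ) ≤
        Module.finrank (ZMod 2) (LinearMap.ker π) + 3 * √((fiberSupp φ π a).card : ℝ) ∧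
      2 * ((suppF φ).image π').card + (fiberSupp φ π a).card ≤
        2 * ((suppF φ).image π).card + 1 := by
  set r := (fiberSupp φ π a).card with hr
  have hr0 : 0 < r := by
    rw [hr, Finset.card_pos, Finset.nonempty_iff_ne_empty]
    intro he
    have hp := parseval φ hφ π a
    have : ∀ c, fiberSum φ π a c = 0 := by
      intro c; by_contra h; rw [← ne_eq, ← mem_fiberSupp, he] at h; simp at h
    simp [this] at hp
  have hr1 : (1 : ℝ) ≤ r := by exact_mod_cast hr0
  have hs1 : 1 ≤ √(r : ℝ) := Real.one_le_sqrt.2 hr1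
  set N := ⌈2 * √(r : ℝ)⌉₊ with hN
  have hN1 : 2 * √(r : ℝ) ≤ N := Nat.le_ceil _
  have hN2 : (N : ℝ) < 2 * √(r : ℝ) + 1 := Nat.ceil_lt_add_one (by positivity)
  obtain ⟨σ, l, c₀, hσ, hz⟩ := exists_character φ hφ r hr0 N π a 0 le_rfl (by
    have h1 : (2 * √(r : ℝ)) ^ 2 ≤ (N : ℝ) ^ 2 := by gcongr
    rw [mul_pow, Real.sq_sqrt (by positivity)] at h1
    nlinarith [abs_nonneg (fiberSum φ π a 0)])
  refine ⟨σ ∘ₗ π, ?_, ?_⟩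
  · have h1 := finrank_ker_comp_le σ π
    have h2 : Module.finrank (ZMod 2) (LinearMap.ker (σ ∘ₗ π)) ≤
      N + Module.finrank (ZMod 2) (LinearMap.ker π) := by omega
    have h3 : (Module.finrank (ZMod 2) (LinearMap.ker (σ ∘ₗ π)) : ℝ) ≤
      N + Module.finrank (ZMod 2) (LinearMap.ker π) := by exact_mod_cast h2
    linarith
  · set P := fiberSupp φ π a with hP
    set T := (suppF φ).image π with hT
    have hPT : P ⊆ T := fiberSupp_subset_image φ π a
    have himg : (suppF φ).image (σ ∘ₗ π) = T.image σ := by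
      rw [hT, Finset.image_image]; rfl
    have hPP : P = fiberSupp φ π (a + l ∘ₗ π) := (fiberSupp_add φ π a l).symm
    have h1 : (T.image σ).card ≤ (T \ P).card + (P.image σ).card := by
      calc (T.image σ).card = ((T \ P).image σ ∪ P.image σ).card := by
            rw [← Finset.image_union (T \ P) P, Finset.sdiff_union_of_subset hPT]
        _ ≤ ((T \ P).image σ).card + (P.image σ).card := Finset.card_union_le _ _
        _ ≤ _ := by exact Nat.add_le_add_right Finset.card_image_le _
    have h2 : (T \ P).card + P.card = T.card := Finset.card_sdiff_add_card_eq_card hPT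
    have h3 : 2 * (P.image σ).card ≤ P.card + 1 := by
      have h4 := Finset.card_eq_sum_card_image σ P
      have h5 : ∑ y ∈ P.image σ, 2 ≤ ∑ y ∈ P.image σ,
          ((P.filter fun c => σ c = y).card + if y = c₀ then 1 else 0) := by
        refine Finset.sum_le_sum fun y hy => ?_
        obtain ⟨c, hcP, hcy⟩ := Finset.mem_image.1 hy
        have hcf : c ∈ P.filter fun c => σ c = y := by simp [hcP, hcy]
        have hpos : 0 < (P.filter fun c => σ c = y).card := Finset.card_pos.2 ⟨c, hcf⟩
        split_ifs with hy0
        · omega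
        · by_contra hlt
          have hone : (P.filter fun c => σ c = y).card = 1 := by omega
          obtain ⟨d, hd⟩ := Finset.card_eq_one.1 hone
          have hz' := hz y hy0
          rw [fiberSum_comp, ← Finset.sum_filter] at hz'
          have hsub : ∑ x ∈ P.filter (fun c => σ c = y), fiberSum φ π (a + l ∘ₗ π) x =
              ∑ x ∈ Finset.univ.filter (fun c => σ c = y), fiberSum φ π (a + l ∘ₗ π) x := by
            apply Finset.sum_subset (Finset.filter_subset_filter _ (Finset.subset_univ _))
            intro x hx hx'
            by_contra hne
            apply hx'
            rw [← ne_eq, ← mem_fiberSupp, ← hPP] at hne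
            exact Finset.mem_filter.2 ⟨hne, (Finset.mem_filter.1 hx).2⟩
          rw [← hsub, hd, Finset.sum_singleton] at hz'
          have : d ∈ P := by
            have : d ∈ P.filter fun c => σ c = y := by rw [hd]; simp
            exact (Finset.mem_filter.1 this).1
          rw [hPP, mem_fiberSupp] at this
          exact this hz'
      rw [Finset.sum_add_distrib, ← h4, Finset.sum_const, smul_eq_mul, Finset.sum_ite_eq'] at h5
      split_ifs at h5 <;> omega
    rw [himg]
    omega

/-! ### Uncertainty principle -/

variable [Fintype (D →ₗ[ZMod 2] ZMod 2)]

lemma sum_sgn (γ : D) : ∑ a : D →ₗ[ZMod 2] ZMod 2, sgn (a γ) =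
    if γ = 0 then (Fintype.card (D →ₗ[ZMod 2] ZMod 2) : ℝ) else 0 := by
  split_ifs with h
  · simp [h, sgn_zero]
  · obtain ⟨l, hl⟩ := exists_dual_eq_one h
    have := Equiv.sum_comp (Equiv.addRight l) fun a : D →ₗ[ZMod 2] ZMod 2 => sgn (a γ)
    simp only [Equiv.coe_addRight, LinearMap.add_apply, sgn_add, hl, sgn_one, mul_neg, mul_one,
      Finset.sum_neg_distrib] at this
    linarith

/-- Uncertainty principle: a nonzero combination of `t` characters is nonzero on at least a `1 / t`
fraction of all points. -/
lemma uncertainty (φ : D → ℝ) (A : Finset D) (hA : ∃ γ ∈ A, φ γ ≠ 0) :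
    (Fintype.card (D →ₗ[ZMod 2] ZMod 2) : ℝ) ≤
      A.card * (Finset.univ.filter fun a : D →ₗ[ZMod 2] ZMod 2 =>
        ∑ γ ∈ A, φ γ * sgn (a γ) ≠ 0).card := by
  set N : ℝ := (Fintype.card (D →ₗ[ZMod 2] ZMod 2) : ℝ)
  set g : (D →ₗ[ZMod 2] ZMod 2) → ℝ := fun a => ∑ γ ∈ A, φ γ * sgn (a γ) with hg
  set Q := ∑ γ ∈ A, φ γ ^ 2 with hQ
  have hQpos : 0 < Q := by
    obtain ⟨γ, hγ, h⟩ := hA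
    exact Finset.sum_pos' (fun _ _ => sq_nonneg _) ⟨γ, hγ, by positivity⟩
  have h1 : ∑ a, g a ^ 2 = N * Q := by
    calc ∑ a, g a ^ 2 = ∑ a, ∑ γ ∈ A, ∑ γ' ∈ A, φ γ * φ γ' *
          sgn ((a : D →ₗ[ZMod 2] ZMod 2) (γ - γ')) := by
          refine Finset.sum_congr rfl fun a _ => ?_
          rw [hg, sq, Finset.sum_mul_sum]
          refine Finset.sum_congr rfl fun γ _ => Finset.sum_congr rfl fun γ' _ => ?_
          rw [map_sub, sgn_sub]; ring
      _ = ∑ γ ∈ A, ∑ γ' ∈ A, φ γ * φ γ' * (if γ - γ' = 0 then N else 0) := by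
          rw [Finset.sum_comm]
          refine Finset.sum_congr rfl fun γ _ => ?_
          rw [Finset.sum_comm]
          refine Finset.sum_congr rfl fun γ' _ => ?_
          rw [← Finset.mul_sum, sum_sgn]
      _ = ∑ γ ∈ A, φ γ ^ 2 * N := by
          refine Finset.sum_congr rfl fun γ hγ => ?_
          simp only [sub_eq_zero, mul_ite, mul_zero]
          rw [Finset.sum_ite_eq, if_pos hγ, sq]
      _ = N * Q := by rw [← Finset.sum_mul, mul_comm]
  have h2 : ∀ a, g a ^ 2 ≤ A.card * Q := by
    intro a
    have := sq_sum_le_card_mul_sum_sq (s := A) (f := fun γ => φ γ * sgn (a γ))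
    refine this.trans (le_of_eq ?_)
    congr 1
    refine Finset.sum_congr rfl fun γ _ => ?_
    rw [mul_pow, sq (sgn _), sgn_mul_self, mul_one]
  have h3 : ∑ a, g a ^ 2 = ∑ a ∈ Finset.univ.filter (fun a => g a ≠ 0), g a ^ 2 := by
    symm; apply Finset.sum_subset (Finset.subset_univ _)
    intro x _ hx; simp at hx; simp [hx]
  have h4 : N * Q ≤ ((Finset.univ.filter (fun a => g a ≠ 0)).card : ℝ) * (A.card * Q) := by
    rw [← h1, h3, ← nsmul_eq_mul]
    exact Finset.sum_le_card_nsmul _ _ _ fun a _ => h2 a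
  have h5 : N * Q ≤ (A.card * ((Finset.univ.filter (fun a => g a ≠ 0)).card : ℝ)) * Q := by
    linarith
  exact le_of_mul_le_mul_right h5 hQpos

/-- Averaging the uncertainty principle over the base point: if the support of `φ` has `s` elements
and its image under `π` has `m`, then some restriction has at least `m² / s` nonzero
coefficients. -/
lemma exists_large_restriction (φ : D → ℝ) (π : D →ₗ[ZMod 2] D) :
    ∃ a : D →ₗ[ZMod 2] ZMod 2, (((suppF φ).image π).card : ℝ) ^ 2 ≤
      (suppF φ).card * (fiberSupp φ π a).card := by
  set S := suppF φ with hS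
  set T := S.image π with hT
  set n : D → ℕ := fun c => (S.filter fun γ => π γ = c).card with hn
  by_contra! hc
  have hcard : 0 < (Fintype.card (D →ₗ[ZMod 2] ZMod 2) : ℝ) := by
    exact_mod_cast Fintype.card_pos
  set N : ℝ := (Fintype.card (D →ₗ[ZMod 2] ZMod 2) : ℝ) with hN
  have hnpos : ∀ c ∈ T, (0 : ℝ) < n c := by
    intro c hcT
    obtain ⟨γ, hγ, h⟩ := Finset.mem_image.1 hcT
    have : 0 < n c := Finset.card_pos.2 ⟨γ, by simp [hγ, h]⟩
    exact_mod_cast this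
  have hunc : ∀ c ∈ T, N / n c ≤
      ((Finset.univ.filter fun a : D →ₗ[ZMod 2] ZMod 2 => fiberSum φ π a c ≠ 0).card : ℝ) := by
    intro c hcT
    obtain ⟨γ, hγ, h⟩ := Finset.mem_image.1 hcT
    have := uncertainty φ (S.filter fun γ => π γ = c) ⟨γ, by simp [hγ, h], mem_suppF.1 hγ⟩
    have hfs : ∀ a : D →ₗ[ZMod 2] ZMod 2, fiberSum φ π a c =
        ∑ γ ∈ S.filter (fun γ => π γ = c), φ γ * sgn (a γ) := by
      intro a
      rw [fiberSum, ← Finset.sum_filter]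
      symm
      apply Finset.sum_subset (Finset.filter_subset_filter _ (Finset.subset_univ _))
      intro x hx hx'
      have : φ x = 0 := by
        by_contra h0; apply hx'; rw [Finset.mem_filter] at hx ⊢; exact ⟨mem_suppF.2 h0, hx.2⟩
      simp [this]
    simp_rw [hfs]
    rw [div_le_iff₀ (hnpos c hcT), mul_comm]
    exact this
  have hdouble : ∑ a : D →ₗ[ZMod 2] ZMod 2, ((fiberSupp φ π a).card : ℝ) =
      ∑ c ∈ T, ((Finset.univ.filter fun a : D →ₗ[ZMod 2] ZMod 2 =>
        fiberSum φ π a c ≠ 0).card : ℝ) := by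
    have : ∀ a : D →ₗ[ZMod 2] ZMod 2, ((fiberSupp φ π a).card : ℝ) =
        ∑ c ∈ T, if fiberSum φ π a c ≠ 0 then (1 : ℝ) else 0 := by
      intro a
      rw [← Finset.sum_filter, Finset.sum_const, nsmul_eq_mul, mul_one]
      congr 2
      ext c
      rw [Finset.mem_filter, mem_fiberSupp]
      exact ⟨fun h => ⟨fiberSupp_subset_image φ π a (mem_fiberSupp.2 h), h⟩, fun h => h.2⟩
    simp_rw [this]
    rw [Finset.sum_comm]
    refine Finset.sum_congr rfl fun c _ => ?_
    rw [← Finset.sum_filter, Finset.sum_const, nsmul_eq_mul, mul_one]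
  have hsum : ∑ c ∈ T, (n c : ℝ) = S.card := by
    exact_mod_cast (Finset.card_eq_sum_card_image π S).symm
  -- Cauchy–Schwarz in the form `m² / ∑ n_c ≤ ∑ 1 / n_c`.
  have hcs : (T.card : ℝ) ^ 2 / S.card ≤ ∑ c ∈ T, 1 / (n c : ℝ) := by
    have := Finset.sq_sum_div_le_sum_sq_div T (fun _ => (1 : ℝ)) hnpos
    rw [hsum] at this
    simpa using this
  have hSpos : (0 : ℝ) < S.card := by
    have h0 := hc 0
    have : T.Nonempty := by
      rw [Finset.nonempty_iff_ne_empty]; intro he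
      rw [he] at h0
      have : (0 : ℝ) ≤ (S.card : ℝ) * ((fiberSupp φ π 0).card : ℝ) := by positivity
      norm_num at h0
      linarith
    rw [hT, Finset.image_nonempty] at this
    exact_mod_cast Finset.card_pos.2 this
  have hlow : N * ((T.card : ℝ) ^ 2 / S.card) ≤ ∑ a : D →ₗ[ZMod 2] ZMod 2,
      ((fiberSupp φ π a).card : ℝ) := by
    rw [hdouble]
    calc N * ((T.card : ℝ) ^ 2 / S.card) ≤ N * ∑ c ∈ T, 1 / (n c : ℝ) := by gcongr
      _ = ∑ c ∈ T, N / n c := by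
        rw [Finset.mul_sum]; refine Finset.sum_congr rfl fun c _ => ?_; ring
      _ ≤ _ := Finset.sum_le_sum hunc
  have hup : ∑ a : D →ₗ[ZMod 2] ZMod 2, ((fiberSupp φ π a).card : ℝ) <
      ∑ _a : D →ₗ[ZMod 2] ZMod 2, (T.card : ℝ) ^ 2 / S.card := by
    refine Finset.sum_lt_sum_of_nonempty Finset.univ_nonempty fun a _ => ?_
    rw [lt_div_iff₀ hSpos, mul_comm]
    exact hc a
  rw [Finset.sum_const, Finset.card_univ, nsmul_eq_mul] at hup
  linarith

/-! ### Iteration -/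

/-- The induction on the size `m` of the image of the support. While `m² > 9s`, some restriction
has `r ≥ m² / s` nonzero coefficients, and `3√r` parities lower `m` by at least `r / 4`. Each unit
of decrease thus costs at most `12√s / m`, which the potential `12√s · log m` pays for. -/
lemma finrank_span_suppF_le (φ : D → ℝ)
    (hφ : ∀ v, ∑ γ, φ γ * φ (γ + v) = if v = 0 then 1 else 0) (m : ℕ) :
    ∀ π : D →ₗ[ZMod 2] D, ((suppF φ).image π).card = m →
      (Module.finrank (ZMod 2) (Submodule.span (ZMod 2) (suppF φ : Set D)) : ℝ) ≤
        Module.finrank (ZMod 2) (LinearMap.ker π) + 3 * √((suppF φ).card : ℝ) +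
          12 * √((suppF φ).card : ℝ) * Real.log m := by
  induction m using Nat.strong_induction_on with
  | _ m ih =>
  intro π hm
  set s := (suppF φ).card with hs
  have hq0 : 0 ≤ √(s : ℝ) := Real.sqrt_nonneg _
  have hq2 : √(s : ℝ) ^ 2 = s := Real.sq_sqrt (by positivity)
  by_cases hsmall : (m : ℝ) ≤ 3 * √(s : ℝ)
  · have h1 : (Module.finrank (ZMod 2) (Submodule.span (ZMod 2) (suppF φ : Set D)) : ℝ) ≤
        Module.finrank (ZMod 2) (LinearMap.ker π) + m := by
      have := finrank_span_le π (suppF φ)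
      rw [hm] at this
      exact_mod_cast this
    have h2 : 0 ≤ 12 * √(s : ℝ) * Real.log m :=
      mul_nonneg (by positivity) (Real.log_natCast_nonneg m)
    linarith
  push Not at hsmall
  have hmpos : (0 : ℝ) < m := by linarith
  have hSne : (suppF φ).Nonempty := by
    rw [← Finset.image_nonempty (f := π), ← Finset.card_pos, hm]
    exact_mod_cast hmpos
  have hspos : (0 : ℝ) < s := by exact_mod_cast Finset.card_pos.2 hSne
  have hqpos : 0 < √(s : ℝ) := Real.sqrt_pos.2 hspos
  obtain ⟨a, ha⟩ := exists_large_restriction φ π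
  obtain ⟨π', hker, hcard⟩ := exists_merge φ hφ π a
  rw [hm, ← hs] at ha
  rw [hm] at hcard
  set r := (fiberSupp φ π a).card with hr
  set m' := ((suppF φ).image π').card with hm'
  have hm'pos : (0 : ℝ) < m' := by
    exact_mod_cast Finset.card_pos.2 (hSne.image π')
  have hr9 : (9 : ℝ) < r := by
    by_contra! hle
    nlinarith
  have hcard' : 2 * (m' : ℝ) + r ≤ 2 * m + 1 := by exact_mod_cast hcard
  have hlt : m' < m := by
    have : (m' : ℝ) < m := by linarith
    exact_mod_cast this
  have hIH := ih m' hlt π' rfl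
  have hp0 : 0 ≤ √(r : ℝ) := Real.sqrt_nonneg _
  have hp2 : √(r : ℝ) ^ 2 = r := Real.sq_sqrt (by positivity)
  -- `m ≤ √s √r`, hence `√r ≤ r √s / m ≤ 4 (m - m') √s / m`.
  have hmle : (m : ℝ) ≤ √(s : ℝ) * √(r : ℝ) := by
    refine abs_le_of_sq_le_sq' ?_ (by positivity) |>.2
    rw [mul_pow, hq2, hp2]; exact ha
  have hcost : √(r : ℝ) ≤ 4 * √(s : ℝ) * (1 - m' / m) := by
    have h1 : 1 - (m' : ℝ) / m = (m - m') / m := by field_simp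
    rw [h1, mul_div_assoc', le_div_iff₀ hmpos]
    calc √(r : ℝ) * m ≤ √(r : ℝ) * (√(s : ℝ) * √(r : ℝ)) := by gcongr
      _ = √(s : ℝ) * √(r : ℝ) ^ 2 := by ring
      _ = √(s : ℝ) * r := by rw [hp2]
      _ ≤ √(s : ℝ) * (4 * (m - m')) := by gcongr; linarith
      _ = _ := by ring
  have hlog : 1 - (m' : ℝ) / m ≤ Real.log m - Real.log m' := by
    have := Real.log_le_sub_one_of_pos (div_pos hm'pos hmpos)
    rw [Real.log_div hm'pos.ne' hmpos.ne'] at this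
    linarith
  have hfin : 3 * √(r : ℝ) ≤ 12 * √(s : ℝ) * (Real.log m - Real.log m') := by
    have : √(s : ℝ) * (1 - (m' : ℝ) / m) ≤ √(s : ℝ) * (Real.log m - Real.log m') := by gcongr
    linarith
  linarith

end Abstract

/-! ### Fourier coefficients of a Boolean function -/

lemma card_dualF (n : ℕ) [Fintype (DualF n)] : Fintype.card (DualF n) = 2 ^ n := by
  have h := Module.card_eq_pow_finrank (K := ZMod 2) (V := DualF n)
  rw [h, Subspace.dual_finrank_eq (K := ZMod 2) (V := Fin n → ZMod 2)]
  simp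

open Classical in
lemma sum_sgn_point (n : ℕ) [Fintype (DualF n)] (x : Fin n → ZMod 2) :
    ∑ γ : DualF n, sgn (γ x) = if x = 0 then (2 : ℝ) ^ n else 0 := by
  have := sum_sgn (D := Fin n → ZMod 2) x
  rw [this, card_dualF]; simp

open Classical in
lemma sum_sgn_form (n : ℕ) (v : DualF n) :
    ∑ x : Fin n → ZMod 2, sgn (v x) = if v = 0 then (2 : ℝ) ^ n else 0 := by
  split_ifs with h
  · simp [h, sgn_zero]
  · obtain ⟨t, ht⟩ : ∃ t, v t ≠ 0 := by
      by_contra! hc; exact h (LinearMap.ext hc)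
    have ht1 := (zmod_two_cases (v t)).resolve_left ht
    have := Equiv.sum_comp (Equiv.addRight t) fun x : Fin n → ZMod 2 => sgn (v x)
    simp only [Equiv.coe_addRight, map_add, sgn_add, ht1, sgn_one, mul_neg, mul_one,
      Finset.sum_neg_distrib] at this
    linarith

open Classical in
/-- The autocorrelation identity `∑ f̂(γ) f̂(γ + v) = [v = 0]`, equivalent to `f² = 1`. -/
lemma autocorrelation (n : ℕ) [Fintype (DualF n)] (f : (Fin n → ZMod 2) → ℝ)
    (hf : IsBooleanFn n f) (v : DualF n) :
    ∑ γ, fCoeff n f γ * fCoeff n f (γ + v) = if v = 0 then 1 else 0 := by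
  have hexp : ∀ γ : DualF n, fCoeff n f γ * fCoeff n f (γ + v) =
      (2 ^ n : ℝ)⁻¹ * (2 ^ n : ℝ)⁻¹ * ∑ x : Fin n → ZMod 2, ∑ y : Fin n → ZMod 2,
        f x * f y * sgn (v y) * sgn (γ (x - y)) := by
    intro γ
    have : (∑ x : Fin n → ZMod 2, f x * sgn (γ x)) *
        (∑ y : Fin n → ZMod 2, f y * sgn ((γ + v) y)) = ∑ x : Fin n → ZMod 2,
          ∑ y : Fin n → ZMod 2, f x * f y * sgn (v y) * sgn (γ (x - y)) := by
      rw [Finset.sum_mul_sum]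
      refine Finset.sum_congr rfl fun x _ => Finset.sum_congr rfl fun y _ => ?_
      rw [LinearMap.add_apply, sgn_add, map_sub, sgn_sub]; ring
    rw [← this]
    unfold fCoeff sgn
    ring
  simp_rw [hexp]
  rw [← Finset.mul_sum, Finset.sum_comm]
  have hin : ∀ x : Fin n → ZMod 2, ∑ γ : DualF n, ∑ y : Fin n → ZMod 2,
      f x * f y * sgn (v y) * sgn (γ (x - y)) = sgn (v x) * 2 ^ n := by
    intro x
    rw [Finset.sum_comm]
    simp_rw [← Finset.mul_sum, sum_sgn_point, sub_eq_zero, mul_ite, mul_zero]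
    rw [Finset.sum_ite_eq, if_pos (Finset.mem_univ _)]
    have : f x * f x = 1 := by rcases hf x with h | h <;> rw [h] <;> norm_num
    rw [this]; ring
  simp_rw [hin]
  rw [← Finset.sum_mul, sum_sgn_form]
  have h2 : (2 ^ n : ℝ) ≠ 0 := by positivity
  split_ifs
  · field_simp
  · simp

/-- There exists a constant `C > 0` such that every Boolean function `f : 𝔽₂ⁿ → {1,-1}`
with Fourier sparsity `s ≥ 1` has Fourier dimension at most `C * s^(2/3)`. -/
theorem dim_le_sparsity_two_thirds :
    ∃ C : ℝ, 0 < C ∧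
      ∀ (n : ℕ) (f : (Fin n → ZMod 2) → ℝ), IsBooleanFn n f → 1 ≤ fSpar n f →
        (fDim n f : ℝ) ≤ C * (fSpar n f : ℝ) ^ ((2 : ℝ) / 3) := by
  classical
  refine ⟨75, by norm_num, fun n f hf hs => ?_⟩
  have hfinD : Finite (DualF n) := Finite.of_injective _ DFunLike.coe_injective
  have hfinDD : Finite (DualF n →ₗ[ZMod 2] ZMod 2) := Finite.of_injective _ DFunLike.coe_injective
  let _ : Fintype (DualF n) := Fintype.ofFinite _
  let _ : Fintype (DualF n →ₗ[ZMod 2] ZMod 2) := Fintype.ofFinite _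
  have hsupp : fSupp n f = (suppF (fCoeff n f) : Set (DualF n)) := by
    ext γ; simp [fSupp, suppF]
  have hspar : fSpar n f = (suppF (fCoeff n f)).card := by
    rw [fSpar, hsupp, Set.ncard_coe_finset]
  have key := finrank_span_suppF_le (fCoeff n f)
    (fun v => by convert autocorrelation n f hf v)
    (suppF (fCoeff n f)).card LinearMap.id (by simp)
  rw [LinearMap.ker_id, finrank_bot, ← hspar, ← hsupp] at key
  change (fDim n f : ℝ) ≤ _ at key
  set s := fSpar n f
  have hs1 : (1 : ℝ) ≤ s := by exact_mod_cast hs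
  have hs0 : (0 : ℝ) < s := by linarith
  have hlog : Real.log s ≤ (s : ℝ) ^ ((1 : ℝ) / 6) / (1 / 6) :=
    Real.log_le_rpow_div hs0.le (by norm_num)
  have hsqrt : √(s : ℝ) = (s : ℝ) ^ ((1 : ℝ) / 2) := Real.sqrt_eq_rpow _
  have hmul : √(s : ℝ) * (s : ℝ) ^ ((1 : ℝ) / 6) = (s : ℝ) ^ ((2 : ℝ) / 3) := by
    rw [hsqrt, ← Real.rpow_add hs0]; norm_num
  have hle : √(s : ℝ) ≤ (s : ℝ) ^ ((2 : ℝ) / 3) := by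
    rw [hsqrt]; exact Real.rpow_le_rpow_of_exponent_le hs1 (by norm_num)
  have h2 : √(s : ℝ) * Real.log s ≤ √(s : ℝ) * ((s : ℝ) ^ ((1 : ℝ) / 6) / (1 / 6)) := by gcongr
  have h3 : √(s : ℝ) * ((s : ℝ) ^ ((1 : ℝ) / 6) / (1 / 6)) = 6 * (s : ℝ) ^ ((2 : ℝ) / 3) := by
    rw [← hmul]; ring
  push_cast at key
  linarith
end

section
/- There exists a constant C > 0 such that for every Boolean function f : 𝔽₂ⁿ → {1,−1} with first spectral norm ‖f̂‖₁ = A, there is an affine subspace V of 𝔽₂ⁿ of co-dimension at most C·A such that f is constant on V. -/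
namespace SpectralNorm

open Finset

variable {n : ℕ}

/-! ### Characters of `𝔽₂ⁿ` -/

noncomputable instance : Fintype (DualF n) :=
  @Fintype.ofFinite _ (Finite.of_injective _ DFunLike.coe_injective)

/-- The nontrivial additive character `t ↦ (-1)^t` of `𝔽₂`. -/
noncomputable def sgn (t : ZMod 2) : ℝ := (-1 : ℝ) ^ t.val

lemma zmod2_cases (t : ZMod 2) : t = 0 ∨ t = 1 := by
  revert t; decide

@[simp] lemma sgn_zero : sgn 0 = 1 := by simp [sgn]

@[simp] lemma sgn_one : sgn 1 = -1 := by simp [sgn, ZMod.val_one]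

lemma sgn_add (s t : ZMod 2) : sgn (s + t) = sgn s * sgn t := by
  have h : (1 : ZMod 2) + 1 = 0 := by decide
  rcases zmod2_cases s with rfl | rfl <;> rcases zmod2_cases t with rfl | rfl <;> simp [h]

lemma dual_add_self (γ : DualF n) : γ + γ = 0 := by
  ext x; exact CharTwo.add_self_eq_zero _

lemma dual_add_cancel (β γ : DualF n) : β + γ + γ = β := by
  rw [add_assoc, dual_add_self, add_zero]

lemma exists_apply_eq_one {γ : DualF n} (h : γ ≠ 0) : ∃ u, γ u = 1 := by
  by_contra! H
  exact h (LinearMap.ext fun x => (zmod2_cases (γ x)).resolve_right (H x))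

lemma card_dual : Fintype.card (DualF n) = 2 ^ n := by
  rw [← Nat.card_eq_fintype_card, Module.natCard_eq_pow_finrank (K := ZMod 2)]
  rw [Subspace.dual_finrank_eq]
  simp

lemma sum_chi_eq_zero {γ : DualF n} (h : γ ≠ 0) : ∑ x, sgn (γ x) = 0 := by
  obtain ⟨u, hu⟩ := exists_apply_eq_one h
  have := Equiv.sum_comp (Equiv.addRight u) fun x => sgn (γ x)
  simp [sgn_add, hu] at this
  linarith

lemma sum_dual_eq_zero {z : Fin n → ZMod 2} (h : z ≠ 0) : ∑ γ : DualF n, sgn (γ z) = 0 := by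
  obtain ⟨i, hi⟩ := Function.ne_iff.1 h
  have hi' : z i = 1 := (zmod2_cases _).resolve_left hi
  have := Equiv.sum_comp (Equiv.addRight (LinearMap.proj i : DualF n)) fun γ => sgn (γ z)
  simp [sgn_add, hi'] at this
  linarith

/-! ### Fourier inversion and autocorrelation -/

/-- Fourier inversion. -/
lemma fourier_inversion (f : (Fin n → ZMod 2) → ℝ) (x : Fin n → ZMod 2) :
    f x = ∑ γ, fCoeff n f γ * sgn (γ x) := by
  have h1 : ∀ y, ∑ γ : DualF n, sgn (γ y) * sgn (γ x) = if y = x then (2 : ℝ) ^ n else 0 := by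
    intro y
    simp only [← sgn_add, ← map_add]
    split_ifs with h
    · subst h
      have : y + y = 0 := by ext i; exact CharTwo.add_self_eq_zero _
      simp [this, card_dual]
    · refine sum_dual_eq_zero fun h' => h ?_
      ext i
      exact CharTwo.add_eq_zero.1 (congrFun h' i)
  have h2 : ∑ γ, fCoeff n f γ * sgn (γ x)
      = (2 ^ n : ℝ)⁻¹ * ∑ y, f y * ∑ γ : DualF n, sgn (γ y) * sgn (γ x) := by
    simp only [fCoeff, mul_sum, sum_mul]
    rw [sum_comm]
    refine sum_congr rfl fun y _ => sum_congr rfl fun γ _ => ?_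
    simp only [sgn]; ring
  rw [h2]
  simp [h1]
  field_simp

/-- The coefficients of a character expansion are recovered by orthogonality. -/
lemma coeff_eq {f : (Fin n → ZMod 2) → ℝ} {c : DualF n → ℝ}
    (hf : ∀ x, f x = ∑ γ, c γ * sgn (γ x)) (δ : DualF n) :
    2 ^ n * c δ = ∑ x, f x * sgn (δ x) := by
  have h1 : ∀ γ : DualF n, ∑ x, sgn (γ x) * sgn (δ x) = if γ = δ then (2 : ℝ) ^ n else 0 := by
    intro γ
    simp only [← sgn_add, ← LinearMap.add_apply]
    split_ifs with h
    · subst h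
      simp [dual_add_self]
    · refine sum_chi_eq_zero fun h' => h ?_
      rw [← dual_add_cancel γ δ, h', zero_add]
  simp only [hf, sum_mul]
  rw [sum_comm]
  simp only [mul_assoc, ← mul_sum, h1]
  simp [mul_comm]

/-- The autocorrelation of the spectrum of a Boolean function is that of the spectrum of `f² = 1`. -/
lemma autocorrelation {f : (Fin n → ZMod 2) → ℝ} {c : DualF n → ℝ} (hb : IsBooleanFn n f)
    (hf : ∀ x, f x = ∑ γ, c γ * sgn (γ x)) (γ : DualF n) :
    2 ^ n * ∑ β, c β * c (β + γ) = ∑ x, sgn (γ x) := by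
  have h1 : 2 ^ n * ∑ β, c β * c (β + γ) = ∑ β, c β * ∑ x, f x * sgn ((β + γ) x) := by
    rw [mul_sum]
    refine sum_congr rfl fun β _ => ?_
    rw [← coeff_eq hf]; ring
  rw [h1]
  simp only [mul_sum]
  rw [sum_comm]
  refine sum_congr rfl fun x _ => ?_
  have h2 : ∑ β, c β * (f x * sgn ((β + γ) x)) = f x * sgn (γ x) * ∑ β, c β * sgn (β x) := by
    rw [mul_sum]
    refine sum_congr rfl fun β _ => ?_
    rw [LinearMap.add_apply, sgn_add]; ring
  rw [h2, ← hf]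
  rcases hb x with h | h <;> rw [h] <;> ring

lemma sum_mul_shift {f : (Fin n → ZMod 2) → ℝ} {c : DualF n → ℝ} (hb : IsBooleanFn n f)
    (hf : ∀ x, f x = ∑ γ, c γ * sgn (γ x)) {γ : DualF n} (hγ : γ ≠ 0) :
    ∑ β, c β * c (β + γ) = 0 := by
  have := autocorrelation hb hf γ
  rw [sum_chi_eq_zero hγ] at this
  exact (mul_eq_zero.1 this).resolve_left (by positivity)

lemma parseval {f : (Fin n → ZMod 2) → ℝ} {c : DualF n → ℝ} (hb : IsBooleanFn n f)
    (hf : ∀ x, f x = ∑ γ, c γ * sgn (γ x)) : ∑ β, c β * c β = 1 := by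
  have := autocorrelation hb hf 0
  simp at this
  exact this

/-! ### The spectrum on a hyperplane -/

/-- The affine projection of `𝔽₂ⁿ` onto the hyperplane `γ = b` along `u`, where `γ u = 1`. -/
def proj (γ : DualF n) (u : Fin n → ZMod 2) (b : ZMod 2) (x : Fin n → ZMod 2) : Fin n → ZMod 2 :=
  x + (γ x + b) • u

open Classical in
/-- The spectrum of `f ∘ proj γ u b`, where `c` is the spectrum of `f` and `γ u = 1`: of the two
forms `β`, `β + γ`, which agree up to a constant on the hyperplane `γ = b`, the one that vanishes at
`u` carries both coefficients. -/
noncomputable def restr (c : DualF n → ℝ) (γ : DualF n) (u : Fin n → ZMod 2) (b : ZMod 2)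
    (β : DualF n) : ℝ :=
  if β u = 0 then c β + sgn b * c (β + γ) else 0

lemma sum_restr_mul (c : DualF n → ℝ) {γ : DualF n} {u : Fin n → ZMod 2} (hu : γ u = 1)
    (b : ZMod 2) (g : DualF n → ℝ) :
    ∑ β, restr c γ u b β * g β
      = ∑ β, c β * if β u = 0 then g β else sgn b * g (β + γ) := by
  classical
  have h1 : ∑ β, restr c γ u b β * g β
      = ∑ β, (if β u = 0 then c β * g β else 0)
        + ∑ β, (if β u = 0 then sgn b * c (β + γ) * g β else 0) := by
    rw [← sum_add_distrib]
    refine sum_congr rfl fun β _ => ?_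
    unfold restr
    split_ifs <;> ring
  rw [h1, ← Equiv.sum_comp (Equiv.addRight γ)
    fun β => if β u = 0 then sgn b * c (β + γ) * g β else 0, ← sum_add_distrib]
  refine sum_congr rfl fun β _ => ?_
  have h11 : (1 : ZMod 2) + 1 = 0 := by decide
  rcases zmod2_cases (β u) with h | h <;> simp [h, hu, h11, dual_add_cancel]
  ring

lemma comp_proj {f : (Fin n → ZMod 2) → ℝ} {c : DualF n → ℝ}
    (hf : ∀ x, f x = ∑ γ, c γ * sgn (γ x)) {γ : DualF n} {u : Fin n → ZMod 2} (hu : γ u = 1)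
    (b : ZMod 2) (x : Fin n → ZMod 2) :
    f (proj γ u b x) = ∑ β, restr c γ u b β * sgn (β x) := by
  rw [sum_restr_mul c hu, hf]
  refine sum_congr rfl fun β _ => ?_
  rcases zmod2_cases (β u) with h | h <;> simp [proj, h, sgn_add]
  exact Or.inl (by ring)

lemma sum_abs_restr_eq (c : DualF n → ℝ) {γ : DualF n} {u : Fin n → ZMod 2} (hu : γ u = 1)
    (b : ZMod 2) :
    2 * ∑ β, |restr c γ u b β| = ∑ β, |c β + sgn b * c (β + γ)| := by
  rw [two_mul]
  nth_rewrite 2 [← Equiv.sum_comp (Equiv.addRight γ)]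
  rw [← sum_add_distrib]
  refine sum_congr rfl fun β _ => ?_
  have h11 : (1 : ZMod 2) + 1 = 0 := by decide
  rcases zmod2_cases (β u) with h | h <;> simp [restr, h, hu, h11, dual_add_cancel]
  rcases zmod2_cases b with rfl | rfl
  · simp [add_comm]
  · simp only [sgn_one]
    rw [← abs_neg]; congr 1; ring

/-! ### Effect of merging the two largest coefficients -/

/-- Merging two coefficients of size at most `a`: if their signs cancel, the loss of absolute value is
twice the smaller one, hence at least `2 |x y| / a`. -/
lemma merge_le {x y s a : ℝ} (hs : s = 1 ∨ s = -1) (hx : |x| ≤ a) (hy : |y| ≤ a) :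
    a * |x + s * y| ≤ a * (|x| + |y|) + 2 * (s * (x * y)) := by
  have key : ∀ y : ℝ, |y| ≤ a → a * |x + y| ≤ a * (|x| + |y|) + 2 * (x * y) := by
    intro y hy
    rw [abs_le] at hx hy
    rcases abs_cases x with ⟨h1, _⟩ | ⟨h1, _⟩ <;> rcases abs_cases y with ⟨h2, _⟩ | ⟨h2, _⟩ <;>
    rcases abs_cases (x + y) with ⟨h3, _⟩ | ⟨h3, _⟩ <;> rw [h1, h2, h3] <;> nlinarith
  rcases hs with rfl | rfl
  · simpa using key y hy
  · simpa using key (-y) (by simpa using hy)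

lemma sgn_eq (b : ZMod 2) : sgn b = 1 ∨ sgn b = -1 := by
  rcases zmod2_cases b with rfl | rfl <;> simp

/-- Two coefficients `x`, `y` reinforce each other on one of the two cosets `b` of a hyperplane. -/
lemma exists_sign (x y : ℝ) : ∃ b, sgn b * (x * y) = |x| * |y| := by
  rw [← abs_mul]
  rcases abs_choice (x * y) with h | h
  · exact ⟨0, by simp [h]⟩
  · exact ⟨1, by simp [h]⟩

lemma abs_merge {x y s : ℝ} (hs : s = 1 ∨ s = -1) (h : s * (x * y) = |x| * |y|) :
    |x + s * y| = |x| + |y| := by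
  have hs2 : s * s = 1 := by rcases hs with rfl | rfl <;> norm_num
  rw [← abs_of_nonneg (by positivity : 0 ≤ |x| + |y|)]
  rw [← sq_eq_sq_iff_abs_eq_abs, add_sq, add_sq, sq_abs, sq_abs]
  linear_combination 2 * h + y ^ 2 * hs2

/-- The spectral norm drops by at least twice the largest coefficient. -/
lemma sum_abs_restr {f : (Fin n → ZMod 2) → ℝ} {c : DualF n → ℝ} (hb : IsBooleanFn n f)
    (hf : ∀ x, f x = ∑ γ, c γ * sgn (γ x)) {γ₁ γ₂ : DualF n} (hne : γ₁ ≠ γ₂)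
    (hpos : 0 < |c γ₂|) (hmax : ∀ β, β ≠ γ₁ → |c β| ≤ |c γ₂|)
    {u : Fin n → ZMod 2} (hu : (γ₁ + γ₂) u = 1) {b : ZMod 2}
    (hsign : sgn b * (c γ₁ * c γ₂) = |c γ₁| * |c γ₂|) :
    ∑ β, |restr c (γ₁ + γ₂) u b β| ≤ ∑ β, |c β| - 2 * |c γ₁| := by
  classical
  have hγ : γ₁ + γ₂ ≠ 0 := by rintro h; simp [h] at hu
  have e1 : γ₁ + (γ₁ + γ₂) = γ₂ := by rw [← add_assoc, dual_add_self, zero_add]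
  have e2 : γ₂ + (γ₁ + γ₂) = γ₁ := by rw [add_comm γ₁, ← add_assoc, dual_add_self, zero_add]
  have hpt : ∀ β, |c γ₂| * |c β + sgn b * c (β + (γ₁ + γ₂))|
      ≤ |c γ₂| * (|c β| + |c (β + (γ₁ + γ₂))|) + 2 * (sgn b * (c β * c (β + (γ₁ + γ₂))))
        - ((if β = γ₁ then 2 * (|c γ₁| * |c γ₂|) else 0)
          + (if β = γ₂ then 2 * (|c γ₁| * |c γ₂|) else 0)) := by
    intro β
    have tri : |c β + sgn b * c (β + (γ₁ + γ₂))| ≤ |c β| + |c (β + (γ₁ + γ₂))| := by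
      refine (abs_add_le _ _).trans_eq ?_
      rcases sgn_eq b with h | h <;> simp [h]
    have tri' := mul_le_mul_of_nonneg_left tri hpos.le
    by_cases h1 : β = γ₁
    · subst h1
      rw [e1] at tri' ⊢
      simp [hne]
      linarith
    by_cases h2 : β = γ₂
    · subst h2
      rw [e2] at tri' ⊢
      simp [hne.symm]
      linarith [mul_comm (c β) (c γ₁)]
    simp only [h1, h2, if_false, add_zero, sub_zero]
    refine merge_le (sgn_eq b) (hmax _ h1) (hmax _ fun h => h2 ?_)
    rw [← dual_add_cancel β (γ₁ + γ₂), h, e1]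
  have hs := sum_le_sum fun β (_ : β ∈ univ) => hpt β
  have hshift : ∑ β, |c (β + (γ₁ + γ₂))| = ∑ β, |c β| :=
    Equiv.sum_comp (Equiv.addRight (γ₁ + γ₂)) fun β => |c β|
  simp only [sum_sub_distrib, sum_add_distrib, ← mul_sum, sum_mul_shift hb hf hγ, hshift,
    sum_ite_eq', mem_univ, if_true] at hs
  rw [← sum_abs_restr_eq c hu b] at hs
  refine le_of_mul_le_mul_left ?_ hpos
  linarith

/-- The coefficients at `γ₁` and `γ₂` merge into one of size `|c γ₁| + |c γ₂|`. -/
lemma abs_restr {c : DualF n → ℝ} {γ₁ γ₂ : DualF n}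
    {u : Fin n → ZMod 2} (hu : (γ₁ + γ₂) u = 1) {b : ZMod 2}
    (hsign : sgn b * (c γ₁ * c γ₂) = |c γ₁| * |c γ₂|) :
    ∃ δ, |restr c (γ₁ + γ₂) u b δ| = |c γ₁| + |c γ₂| := by
  have e1 : γ₁ + (γ₁ + γ₂) = γ₂ := by rw [← add_assoc, dual_add_self, zero_add]
  have e2 : γ₂ + (γ₁ + γ₂) = γ₁ := by rw [add_comm γ₁, ← add_assoc, dual_add_self, zero_add]
  rcases zmod2_cases (γ₁ u) with h | h
  · refine ⟨γ₁, ?_⟩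
    rw [restr, if_pos h, e1]
    exact abs_merge (sgn_eq b) hsign
  · have h2 : γ₂ u = 0 := by
      rw [LinearMap.add_apply, h] at hu
      simpa using hu
    refine ⟨γ₂, ?_⟩
    rw [restr, if_pos h2, e2, add_comm |c γ₁|]
    exact abs_merge (sgn_eq b) (by rw [mul_comm (c γ₂), hsign, mul_comm])

/-! ### The greedy restriction -/

/-- If `f ∘ proj γ u b` is constant on a coset, then `f` is constant on the image of that coset under
the projection, whose dimension is smaller by at most one. -/
lemma descend {f : (Fin n → ZMod 2) → ℝ} {γ : DualF n} {u : Fin n → ZMod 2} {b : ZMod 2} {k : ℕ}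
    (h : ∃ (W : Submodule (ZMod 2) (Fin n → ZMod 2)) (p : Fin n → ZMod 2) (v : ℝ),
      n ≤ Module.finrank (ZMod 2) W + k ∧ ∀ w ∈ W, f (proj γ u b (p + w)) = v) :
    ∃ (W : Submodule (ZMod 2) (Fin n → ZMod 2)) (p : Fin n → ZMod 2) (v : ℝ),
      n ≤ Module.finrank (ZMod 2) W + (k + 1) ∧ ∀ w ∈ W, f (p + w) = v := by
  obtain ⟨W, p, v, hn, hv⟩ := h
  -- the linear part of the projection
  let L : (Fin n → ZMod 2) →ₗ[ZMod 2] (Fin n → ZMod 2) := LinearMap.id + γ.smulRight u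
  refine ⟨W.map L, proj γ u b p, v, ?_, ?_⟩
  · have hker : LinearMap.ker (L.domRestrict W) ≤
        (Submodule.span (ZMod 2) {u}).comap W.subtype := by
      intro w hw
      have hw' : (w : Fin n → ZMod 2) + γ w • u = 0 := by simpa [L] using hw
      rw [Submodule.mem_comap, Submodule.mem_span_singleton]
      refine ⟨-γ w, ?_⟩
      rw [neg_smul, Submodule.subtype_apply]
      exact (eq_neg_of_add_eq_zero_left hw').symm
    have h1 := Submodule.finrank_mono hker
    have h2 : Module.finrank (ZMod 2) ((Submodule.span (ZMod 2) {u}).comap W.subtype) ≤ 1 := by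
      rw [(Submodule.equivMapOfInjective W.subtype W.injective_subtype _).finrank_eq]
      refine (Submodule.finrank_mono (Submodule.map_comap_le _ _)).trans ?_
      simpa using finrank_span_le_card (R := ZMod 2) ({u} : Set (Fin n → ZMod 2))
    have h3 := (L.domRestrict W).finrank_range_add_finrank_ker
    rw [LinearMap.range_domRestrict] at h3
    omega
  · rintro _ ⟨w, hw, rfl⟩
    rw [← hv w hw]
    congr 1
    simp only [proj, L, LinearMap.add_apply, LinearMap.id_apply, LinearMap.smulRight_apply, map_add,
      add_smul]
    abel

/-- The greedy process, by induction on an integer bound `k` for the potential. The form `γ₀` need not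
carry the largest coefficient: the potential is smallest for the form which does. -/
lemma exists_constant_coset (B : ℝ) (k : ℕ) : ∀ (f : (Fin n → ZMod 2) → ℝ) (c : DualF n → ℝ)
    (γ₀ : DualF n), IsBooleanFn n f → (∀ x, f x = ∑ γ, c γ * sgn (γ x)) →
    ∑ γ, |c γ| ≤ B → ∑ γ, |c γ| + 2 * B * (1 - |c γ₀|) ≤ k →
    ∃ (W : Submodule (ZMod 2) (Fin n → ZMod 2)) (p : Fin n → ZMod 2) (v : ℝ),
      n ≤ Module.finrank (ZMod 2) W + (k + 1) ∧ ∀ w ∈ W, f (p + w) = v := by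
  classical
  induction k with
  | zero =>
    intro f c γ₀ hb hf hB hk
    -- impossible, since the potential is at least `∑ |c| ≥ 1`
    exfalso
    have hP := parseval hb hf
    have hle : ∀ β, |c β| ≤ 1 := fun β => by
      have := single_le_sum (fun γ _ => mul_self_nonneg (c γ)) (mem_univ β)
      rw [hP] at this
      exact abs_le_one_iff_mul_self_le_one.2 this
    have h1 : (1 : ℝ) ≤ ∑ γ, |c γ| := by
      rw [← hP]
      refine sum_le_sum fun β _ => ?_
      rw [← abs_mul_abs_self]
      exact mul_le_of_le_one_left (abs_nonneg _) (hle β)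
    have := mul_nonneg (by linarith : 0 ≤ 2 * B) (sub_nonneg.2 (hle γ₀))
    push_cast at hk
    linarith
  | succ k ih =>
    intro f c γ₀ hb hf hB hk
    have hP := parseval hb hf
    have hB0 : 0 ≤ B := le_trans (sum_nonneg fun _ _ => abs_nonneg _) hB
    obtain ⟨γ₁, -, hγ₁⟩ := exists_max_image univ (fun γ => |c γ|) ⟨γ₀, mem_univ _⟩
    by_cases hz : ∀ β, β ≠ γ₁ → c β = 0
    · -- `f` is a multiple of the character of `γ₁`
      refine ⟨LinearMap.ker γ₁, 0, c γ₁, ?_, ?_⟩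
      · have h1 := γ₁.finrank_range_add_finrank_ker
        have h2 := Submodule.finrank_le (LinearMap.range γ₁)
        simp at h1 h2
        omega
      · intro w hw
        rw [hf, sum_eq_single γ₁]
        · rw [zero_add, LinearMap.mem_ker.1 hw]; simp
        · intro β _ hβ; simp [hz β hβ]
        · simp
    push Not at hz
    obtain ⟨β₀, hβ₀, hcβ₀⟩ := hz
    obtain ⟨γ₂, hγ₂m, hγ₂⟩ := exists_max_image (univ.erase γ₁) (fun γ => |c γ|)
      ⟨β₀, by simp [hβ₀]⟩
    have hne : γ₁ ≠ γ₂ := (ne_of_mem_erase hγ₂m).symm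
    have hmax : ∀ β, β ≠ γ₁ → |c β| ≤ |c γ₂| := fun β hβ => hγ₂ β (by simp [hβ])
    have hpos : 0 < |c γ₂| := (abs_pos.2 hcβ₀).trans_le (hmax _ hβ₀)
    have hγ : γ₁ + γ₂ ≠ 0 := fun h => hne <| by
      rw [← dual_add_cancel γ₁ γ₂, h, zero_add]
    obtain ⟨u, hu⟩ := exists_apply_eq_one hγ
    obtain ⟨b, hsign⟩ := exists_sign (c γ₁) (c γ₂)
    have hA := sum_abs_restr hb hf hne hpos hmax hu hsign
    obtain ⟨δ, hδ⟩ := abs_restr (c := c) hu hsign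
    have h0 : |c γ₀| ≤ |c γ₁| := hγ₁ γ₀ (mem_univ _)
    have hnn : 0 ≤ |c γ₁| := abs_nonneg _
    refine descend (ih (fun x => f (proj (γ₁ + γ₂) u b x)) (restr c (γ₁ + γ₂) u b) δ
      (fun x => hb _) (comp_proj hf hu b) (by linarith) ?_)
    rw [hδ]
    push_cast at hk
    have hk' : 2 * B * |c γ₀| ≤ 2 * B * |c γ₁| := mul_le_mul_of_nonneg_left h0 (by linarith)
    have hBpos : 0 ≤ B * |c γ₂| := mul_nonneg hB0 hpos.le
    by_cases hhalf : 1 / 2 ≤ |c γ₁|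
    · linarith
    · -- Parseval bounds the second largest coefficient from below
      have hpt : ∀ β, c β * c β ≤ |c γ₂| * |c β| + if β = γ₁ then |c γ₁| * |c γ₁| else 0 := by
        intro β
        by_cases h : β = γ₁
        · subst h
          rw [if_pos rfl, abs_mul_abs_self]
          have := mul_nonneg hpos.le hnn
          linarith
        · rw [if_neg h, add_zero, ← abs_mul_abs_self]
          exact mul_le_mul_of_nonneg_right (hmax β h) (abs_nonneg _)
      have hs := sum_le_sum fun β (_ : β ∈ univ) => hpt β
      rw [hP, sum_add_distrib, ← mul_sum] at hs
      simp only [sum_ite_eq', mem_univ, if_true] at hs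
      have h1 : |c γ₂| * ∑ β, |c β| ≤ |c γ₂| * B := mul_le_mul_of_nonneg_left hB hpos.le
      have h2 : |c γ₁| * |c γ₁| ≤ 1 / 2 * (1 / 2) := by
        push Not at hhalf
        exact mul_le_mul hhalf.le hhalf.le hnn (by norm_num)
      linarith

/-! ### Equations of a coset -/

/-- Every coset of codimension `d` is cut out by `d` linearly independent affine equations. -/
lemma exists_equations (W : Submodule (ZMod 2) (Fin n → ZMod 2)) (p : Fin n → ZMod 2) :
    ∃ (d : ℕ) (γ : Fin d → DualF n) (b : Fin d → ZMod 2),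
      Module.finrank (ZMod 2) W + d = n ∧ LinearIndependent (ZMod 2) γ ∧
      ∀ x, (∀ i, γ i x = b i) → x - p ∈ W := by
  let e := Module.finBasis (ZMod 2) W.dualAnnihilator
  refine ⟨_, fun i => (e i : DualF n), fun i => (e i : DualF n) p, ?_, ?_, ?_⟩
  · rw [Subspace.finrank_add_finrank_dualAnnihilator_eq]; simp
  · exact e.linearIndependent.map' W.dualAnnihilator.subtype (Submodule.ker_subtype _)
  · intro x hx
    rw [← Subspace.dualAnnihilator_dualCoannihilator_eq (W := W), Submodule.mem_dualCoannihilator]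
    intro φ hφ
    have h : (⟨φ, hφ⟩ : W.dualAnnihilator) ∈ Submodule.span (ZMod 2) (Set.range e) := by
      rw [e.span_eq]; trivial
    have hle : Submodule.span (ZMod 2) (Set.range e) ≤
        LinearMap.ker ((LinearMap.applyₗ (x - p) : DualF n →ₗ[ZMod 2] ZMod 2) ∘ₗ
          W.dualAnnihilator.subtype) := by
      rw [Submodule.span_le]
      rintro _ ⟨i, rfl⟩
      simp [hx i]
    simpa using hle h

end SpectralNorm

/-- There is a constant `C > 0` such that every Boolean function `f` with first
spectral norm `A = ‖f̂‖₁` is constant on some affine subspace of `𝔽₂ⁿ` of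
co-dimension at most `C * A`. -/
theorem exists_affine_subspace_codim_spectral_norm :
    ∃ C : ℝ, 0 < C ∧
      ∀ (n : ℕ) (f : (Fin n → ZMod 2) → ℝ) (A : ℝ), IsBooleanFn n f →
        A = ∑ᶠ γ : DualF n, |fCoeff n f γ| →
        ∃ (d : ℕ) (γ : Fin d → DualF n) (b : Fin d → ZMod 2) (v : ℝ),
          (d : ℝ) ≤ C * A ∧
          LinearIndependent (ZMod 2) γ ∧
          (∀ x, (∀ i, γ i x = b i) → f x = v) := by
  classical
  refine ⟨5, by norm_num, fun n f A hb hA => ?_⟩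
  rw [finsum_eq_sum_of_fintype] at hA
  have hf := SpectralNorm.fourier_inversion f
  have hP := SpectralNorm.parseval hb hf
  have hle : ∀ β, |fCoeff n f β| ≤ 1 := fun β => by
    have := Finset.single_le_sum (fun γ _ => mul_self_nonneg (fCoeff n f γ)) (Finset.mem_univ β)
    rw [hP] at this
    exact abs_le_one_iff_mul_self_le_one.2 this
  have hA1 : 1 ≤ A := by
    rw [hA, ← hP]
    refine Finset.sum_le_sum fun β _ => ?_
    rw [← abs_mul_abs_self]
    exact mul_le_of_le_one_left (abs_nonneg _) (hle β)
  have hpot : ∑ γ, |fCoeff n f γ| + 2 * A * (1 - |fCoeff n f 0|) ≤ (⌈3 * A⌉₊ : ℕ) := by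
    refine le_trans ?_ (Nat.le_ceil _)
    have := mul_nonneg (by linarith : 0 ≤ 2 * A) (abs_nonneg (fCoeff n f 0))
    linarith
  obtain ⟨W, p, v, hW, hv⟩ :=
    SpectralNorm.exists_constant_coset A ⌈3 * A⌉₊ f (fCoeff n f) 0 hb hf hA.ge hpot
  obtain ⟨d, γ, b, hd, hli, hx⟩ := SpectralNorm.exists_equations W p
  refine ⟨d, γ, b, v, ?_, hli, fun x h => ?_⟩
  · -- `d ≤ ⌈3 A⌉ + 1 ≤ 3 A + 2 ≤ 5 A`
    have h1 : (d : ℝ) ≤ (⌈3 * A⌉₊ : ℝ) + 1 := by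
      have : d ≤ ⌈3 * A⌉₊ + 1 := by omega
      exact_mod_cast this
    have h2 := Nat.ceil_lt_add_one (by linarith : 0 ≤ 3 * A)
    linarith
  · rw [← hv _ (hx x h), add_sub_cancel]
end

section
/- (Uncertainty Principle) Let p : ℝⁿ → ℝ be a nonzero multilinear polynomial with exactly s monomials having nonzero coefficients. Then the number of points x ∈ {+1,−1}ⁿ with p(x) ≠ 0 is at least 2ⁿ/s; equivalently, for x drawn uniformly from {+1,−1}ⁿ, Pr[p(x) ≠ 0] ≥ 1/s. -/
/-!
The monomials `χ_S(x) = ∏_{i ∈ S} x_i` are orthogonal on the cube `{+1,-1}ⁿ`, so every coefficient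
is recovered by `2ⁿ c_S = ∑_x p(x) χ_S(x)`. Choose `S` with `|c_S|` maximal. At each point
`|p(x)| ≤ ∑_T |c_T| ≤ s |c_S|`, so if `p` is nonzero at exactly `N` points then
`2ⁿ |c_S| ≤ ∑_x |p(x)| ≤ N s |c_S|`, and `c_S ≠ 0` can be cancelled.
-/

/-- The monomial `∏_{i ∈ S} x_i` on the cube; `true` encodes the coordinate `-1`. -/
def cubeChar {n : ℕ} (S : Finset (Fin n)) (b : Fin n → Bool) : ℝ :=
  ∏ i ∈ S, (if b i then (-1 : ℝ) else 1)

lemma abs_cubeChar {n : ℕ} (S : Finset (Fin n)) (b : Fin n → Bool) : |cubeChar S b| = 1 := by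
  rw [cubeChar, Finset.abs_prod]
  refine Finset.prod_eq_one fun i _ => ?_
  split_ifs <;> simp

/-- Orthogonality of the monomials: the sum over the cube factors over the coordinates, and a
coordinate lying in exactly one of `S`, `T` contributes the factor `(-1) + 1 = 0`. -/
lemma sum_cubeChar_mul {n : ℕ} (S T : Finset (Fin n)) :
    ∑ b, cubeChar T b * cubeChar S b = if T = S then (2 : ℝ) ^ n else 0 := by
  have h (b : Fin n → Bool) : cubeChar T b * cubeChar S b =
      ∏ i, ((if i ∈ T then (if b i then (-1 : ℝ) else 1) else 1) *
        (if i ∈ S then (if b i then (-1 : ℝ) else 1) else 1)) := by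
    rw [Finset.prod_mul_distrib]
    simp [cubeChar, Finset.prod_ite_mem]
  simp_rw [h]
  rw [← Fintype.prod_sum (fun (i : Fin n) (x : Bool) =>
    (if i ∈ T then (if x then (-1 : ℝ) else 1) else 1) *
        (if i ∈ S then (if x then (-1 : ℝ) else 1) else 1))]
  split_ifs with hTS
  · subst hTS
    rw [Finset.prod_congr rfl (g := fun _ => (2 : ℝ))]
    · simp
    · intro i _
      by_cases hi : i ∈ T <;> norm_num [hi]
  · obtain ⟨i, hi⟩ : ∃ i, ¬ (i ∈ T ↔ i ∈ S) := by
      by_contra! hcon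
      exact hTS (Finset.ext hcon)
    refine Finset.prod_eq_zero (Finset.mem_univ i) ?_
    by_cases h1 : i ∈ T <;> by_cases h2 : i ∈ S <;> simp_all

/-- **Uncertainty principle.** Let `p(x) = Σ_{S ⊆ [n]} c_S Π_{i ∈ S} x_i` be a nonzero
multilinear real polynomial with exactly `s` monomials having nonzero coefficients.
Then the number of points of `{+1,-1}ⁿ` at which `p` does not vanish is at least
`2ⁿ / s`. -/
theorem uncertainty_principle (n : ℕ) (c : Finset (Fin n) → ℝ) (hc : c ≠ 0)
    (s : ℕ) (hs : s = Nat.card {S : Finset (Fin n) // c S ≠ 0}) :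
    (2 ^ n : ℝ) / s ≤
      Nat.card {b : Fin n → Bool //
        (∑ S : Finset (Fin n), c S * ∏ i ∈ S, (if b i then (-1 : ℝ) else 1)) ≠ 0} := by
  classical
  change (2 ^ n : ℝ) / s ≤
    Nat.card {b : Fin n → Bool // (∑ S : Finset (Fin n), c S * cubeChar S b) ≠ 0}
  set p : (Fin n → Bool) → ℝ := fun b => ∑ S : Finset (Fin n), c S * cubeChar S b with hp
  change (2 ^ n : ℝ) / s ≤ Nat.card {b : Fin n → Bool // p b ≠ 0}
  obtain ⟨S, -, hS⟩ := Finset.exists_max_image Finset.univ (fun T => |c T|)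
    Finset.univ_nonempty
  have hpos : 0 < |c S| := by
    obtain ⟨T, hT⟩ := Function.ne_iff.mp hc
    exact (abs_pos.mpr hT).trans_le (hS T (Finset.mem_univ T))
  have hs' : (s : ℝ) = ((Finset.univ.filter fun T => c T ≠ 0).card : ℝ) := by
    rw [hs, Nat.card_eq_fintype_card, Fintype.card_subtype]
  rw [Nat.card_eq_fintype_card, Fintype.card_subtype]
  have hspos : (0 : ℝ) < s := by
    rw [hs', Nat.cast_pos, Finset.card_pos]
    exact ⟨S, by simpa using hpos⟩
  have hbound (b) : |p b| ≤ s * |c S| := by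
    calc |p b| ≤ ∑ T, |c T| := by
          refine (Finset.abs_sum_le_sum_abs _ _).trans_eq ?_
          simp [abs_mul, abs_cubeChar]
      _ = ∑ T with c T ≠ 0, |c T| := by
          refine (Finset.sum_filter_of_ne ?_).symm
          intro T _ h
          exact abs_ne_zero.mp h
      _ ≤ s * |c S| := by
          rw [hs', ← nsmul_eq_mul]
          exact Finset.sum_le_card_nsmul _ _ _ fun T _ => hS T (Finset.mem_univ T)
  have hcoef : ∑ b, p b * cubeChar S b = 2 ^ n * c S := by
    simp_rw [hp, Finset.sum_mul]
    rw [Finset.sum_comm]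
    simp_rw [mul_assoc, ← Finset.mul_sum, sum_cubeChar_mul]
    simp [mul_comm]
  have hmain : 2 ^ n * |c S| ≤
      ((Finset.univ.filter fun b => p b ≠ 0).card : ℝ) * s * |c S| := by
    calc 2 ^ n * |c S| = |∑ b, p b * cubeChar S b| := by rw [hcoef, abs_mul]; simp
      _ ≤ ∑ b, |p b| := by
          refine (Finset.abs_sum_le_sum_abs _ _).trans_eq ?_
          simp [abs_mul, abs_cubeChar]
      _ = ∑ b with p b ≠ 0, |p b| := by
          refine (Finset.sum_filter_of_ne ?_).symm
          intro b _ h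
          exact abs_ne_zero.mp h
      _ ≤ _ := by
          rw [mul_assoc, ← nsmul_eq_mul]
          exact Finset.sum_le_card_nsmul _ _ _ fun b _ => hbound b
  rw [div_le_iff₀ hspos]
  exact le_of_mul_le_mul_right hmain hpos
end
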